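/- Let M be a finite set, let J be a job set over M, and let J_S ⊆ J be a subset. Let β ≥ 1 be a real number with |J| ≤ β·|J_S|, let l and L be positive integers, and let l' be an integer with l' ≥ 4·β·l. Let h : J → {0,…,L−1} be a function whose restriction to J_S is (L,l)-good for the job set J_S. Let (D_{T,m}), indexed by T ∈ {0,…,2L−1} and m ∈ M, be a family of pairwise disjoint finite sets of pairs (j,i) with j ∈ J and 0 ≤ i < len(j), such that: (i) seq(j)_i = m and h(j) + i = T for every (j,i) ∈ D_{T,m}; (ii) each job j ∈ J occurs in at most one pair over all the sets; (iii) every set D_{T,m} is either empty or has size strictly greater than l'. Then the number of jobs of J_S that occur in some pair of some D_{T,m} is at most (3/4)·|J_S|. -/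

import Mathlib

open Finset

/-- A bad pattern for the job set `JS` (a finite subset of the job-index type `ι`) with
machine sequences `seq` and parameters `L`, `l`. -/
def IsBadPatternOn {M ι : Type*} [Fintype M] (JS : Finset ι) (seq : ι → List M)
    (L l : ℕ) (B : Fin (2 * L) → M → Finset (ι × ℕ)) : Prop :=
  (∀ T m, ∀ p ∈ B T m, p.1 ∈ JS ∧ (seq p.1)[p.2]? = some m) ∧
  (∀ T m T' m', ∀ p ∈ B T m, ∀ p' ∈ B T' m', p.1 = p'.1 → T = T' ∧ m = m' ∧ p = p') ∧
  (∀ T m, B T m = ∅ ∨ l < (B T m).card) ∧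
  JS.card < 2 * ∑ T, ∑ m, (B T m).card

/-- The bad pattern `B` occurs for `h` if `h(j) + i = T` for all `T`, `m`, `(j,i) ∈ B T m`. -/
def PatternOccursOn {M ι : Type*} [Fintype M]
    {L : ℕ} (B : Fin (2 * L) → M → Finset (ι × ℕ)) (h : ι → Fin L) : Prop :=
  ∀ T m, ∀ p ∈ B T m, (h p.1 : ℕ) + p.2 = (T : ℕ)

/-!
Discard from each `D T m` the jobs outside `JS`, and then every set left with at most `l` pairs.
What survives satisfies all conditions on a bad pattern for `JS` except possibly the one on its
total size, and it occurs for `h`; goodness therefore bounds its size by `|JS| / 2`. A nonempty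
`D T m` has more than `l' ≥ 4 β l` pairs, so the pairs lost in the second step are at most a
`1 / (4 β)` fraction of all pairs of `D`, that is, at most `|ι| / (4 β) ≤ |JS| / 4`.
-/

section Counting

variable {κ α ι ν : Type*}

/-- The overcongested part of a finite set at threshold `l`: the set itself if it has more than `l`
elements, and the empty set otherwise. Applied to every member of a family of drops, it enforces
the size condition of a bad pattern. -/
def heavyPart (l : ℕ) (s : Finset α) : Finset α :=
  if l < #s then s else ∅

theorem heavyPart_of_lt_card {l : ℕ} {s : Finset α} (hs : l < #s) : heavyPart l s = s :=
  if_pos hs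

theorem heavyPart_of_card_le {l : ℕ} {s : Finset α} (hs : #s ≤ l) : heavyPart l s = ∅ :=
  if_neg hs.not_gt

theorem heavyPart_subset (l : ℕ) (s : Finset α) : heavyPart l s ⊆ s := by
  rcases lt_or_ge l #s with hs | hs
  · exact (heavyPart_of_lt_card hs).subset
  · exact heavyPart_of_card_le hs ▸ empty_subset s

theorem heavyPart_eq_empty_or_lt_card (l : ℕ) (s : Finset α) :
    heavyPart l s = ∅ ∨ l < #(heavyPart l s) := by
  rcases lt_or_ge l #s with hs | hs
  · exact .inr ((heavyPart_of_lt_card hs).symm ▸ hs)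
  · exact .inl (heavyPart_of_card_le hs)

theorem mul_card_le_mul_card_heavyPart_add_card {l l' : ℕ} {c : ℝ} (hc : 0 ≤ c)
    (hl' : c * l ≤ l') {s t : Finset α} (hst : s ⊆ t) (ht : t = ∅ ∨ l' < #t) :
    c * #s ≤ c * #(heavyPart l s) + #t := by
  rcases lt_or_ge l #s with hs | hs
  · rw [heavyPart_of_lt_card hs]
    exact le_add_of_nonneg_right (Nat.cast_nonneg _)
  rcases ht with rfl | ht
  · simp [subset_empty.mp hst, heavyPart]
  calc c * #s ≤ c * l := by gcongr
    _ ≤ l' := hl'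
    _ ≤ #t := by exact_mod_cast ht.le
    _ ≤ c * #(heavyPart l s) + #t := le_add_of_nonneg_left (by positivity)

theorem mul_sum_card_le_mul_sum_card_heavyPart_add_sum_card [Fintype κ] {l l' : ℕ} {c : ℝ}
    (hc : 0 ≤ c) (hl' : c * l ≤ l') {s t : κ → Finset α} (hst : ∀ k, s k ⊆ t k)
    (ht : ∀ k, t k = ∅ ∨ l' < #(t k)) :
    c * ∑ k, (#(s k) : ℝ) ≤ c * ∑ k, (#(heavyPart l (s k)) : ℝ) + ∑ k, (#(t k) : ℝ) := by
  simp only [mul_sum, ← sum_add_distrib]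
  exact sum_le_sum fun k _ => mul_card_le_mul_card_heavyPart_add_card hc hl' (hst k) (ht k)

theorem sum_card_le_card_of_jointly_injective [Fintype κ] [Fintype ι] (f : α → ι)
    {t : κ → Finset α} (hf : ∀ k k', ∀ a ∈ t k, ∀ a' ∈ t k', f a = f a' → k = k' ∧ a = a') :
    ∑ k, #(t k) ≤ Fintype.card ι := by
  rw [← card_sigma, ← card_univ]
  refine card_le_card_of_injOn (fun x => f x.2) (fun _ _ => mem_univ _) ?_
  rintro ⟨k, a⟩ ha ⟨k', a'⟩ ha' haa'
  obtain ⟨rfl, rfl⟩ := hf k k' a (mem_sigma.mp ha).2 a' (mem_sigma.mp ha').2 haa'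
  rfl

theorem ncard_setOf_exists_mem_le_sum_card_filter [Fintype κ] [DecidableEq ι] (S : Finset ι)
    (t : κ → Finset (ι × ν)) :
    {j ∈ (S : Set ι) | ∃ k i, (j, i) ∈ t k}.ncard ≤ ∑ k, #{p ∈ t k | p.1 ∈ S} := by
  have occurring_subset : {j ∈ (S : Set ι) | ∃ k i, (j, i) ∈ t k} ⊆
      (univ.biUnion fun k => {p ∈ t k | p.1 ∈ S}.image Prod.fst : Finset ι) := by
    rintro j ⟨hj, k, i, hji⟩
    exact mem_biUnion.mpr
      ⟨k, mem_univ k, mem_image.mpr ⟨(j, i), mem_filter.mpr ⟨hji, hj⟩, rfl⟩⟩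
  calc {j ∈ (S : Set ι) | ∃ k i, (j, i) ∈ t k}.ncard
      ≤ #(univ.biUnion fun k => {p ∈ t k | p.1 ∈ S}.image Prod.fst) := by
        rw [← Set.ncard_coe_finset]
        exact Set.ncard_le_ncard occurring_subset (finite_toSet _)
    _ ≤ ∑ k, #({p ∈ t k | p.1 ∈ S}.image Prod.fst) := card_biUnion_le
    _ ≤ ∑ k, #{p ∈ t k | p.1 ∈ S} := sum_le_sum fun _ _ => card_image_le

end Counting

theorem two_mul_sum_card_heavyPart_le_of_good {M ι : Type*} [Fintype M] [DecidableEq ι]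
    {seq : ι → List M} {JS : Finset ι} {L l : ℕ} {h : ι → Fin L}
    (hgood : ∀ B : Fin (2 * L) → M → Finset (ι × ℕ),
      IsBadPatternOn JS seq L l B → ¬ PatternOccursOn B h)
    {D : Fin (2 * L) → M → Finset (ι × ℕ)}
    (hD1 : ∀ T m, ∀ p ∈ D T m, (seq p.1)[p.2]? = some m ∧ (h p.1 : ℕ) + p.2 = (T : ℕ))
    (hD2 : ∀ T m T' m', ∀ p ∈ D T m, ∀ p' ∈ D T' m', p.1 = p'.1 → T = T' ∧ m = m' ∧ p = p') :
    2 * ∑ T, ∑ m, #(heavyPart l {p ∈ D T m | p.1 ∈ JS}) ≤ #JS := by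
  have mem_of_mem_heavy {T m p} (hp : p ∈ heavyPart l {p ∈ D T m | p.1 ∈ JS}) :
      p ∈ D T m ∧ p.1 ∈ JS :=
    mem_filter.mp (heavyPart_subset _ _ hp)
  by_contra! hlarge
  refine hgood (fun T m => heavyPart l {p ∈ D T m | p.1 ∈ JS}) ⟨?_, ?_, ?_, hlarge⟩ ?_
  · exact fun T m p hp => ⟨(mem_of_mem_heavy hp).2, (hD1 T m p (mem_of_mem_heavy hp).1).1⟩
  · exact fun T m T' m' p hp p' hp' =>
      hD2 T m T' m' p (mem_of_mem_heavy hp).1 p' (mem_of_mem_heavy hp').1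
  · exact fun T m => heavyPart_eq_empty_or_lt_card l _
  · exact fun T m p hp => (hD1 T m p (mem_of_mem_heavy hp).1).2

/-- Let `J` be a job set (the finite type `ι` with sequences `seq`) and `J_S ⊆ J` a subset
with `|J| ≤ β·|J_S|` for some `β ≥ 1`. Let `l' ≥ 4·β·l` and let `h` be a hash function
whose restriction to `J_S` is `(L,l)`-good for `J_S`. If `(D_{T,m})` is a family of sets
of (job, position) pairs such that (i) `seq(j)_i = m` and `h(j)+i = T` for `(j,i) ∈ D T m`,
(ii) each job occurs in at most one pair over all the sets, and (iii) every set is empty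
or has size `> l'`, then at most `(3/4)·|J_S|` jobs of `J_S` occur in some pair of some
`D_{T,m}`. -/
theorem dropped_good_jobs_le {M ι : Type*} [Fintype M] [Fintype ι]
    (seq : ι → List M) (JS : Finset ι)
    (β : ℝ) (hβ : 1 ≤ β) (hJβ : (Fintype.card ι : ℝ) ≤ β * (JS.card : ℝ))
    (L l : ℕ) (hL0 : 0 < L) (hl0 : 0 < l)
    (l' : ℕ) (hl' : 4 * β * (l : ℝ) ≤ (l' : ℝ))
    (h : ι → Fin L)
    (hgood : ∀ B : Fin (2 * L) → M → Finset (ι × ℕ),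
      IsBadPatternOn JS seq L l B → ¬ PatternOccursOn B h)
    (D : Fin (2 * L) → M → Finset (ι × ℕ))
    (hD1 : ∀ T m, ∀ p ∈ D T m, (seq p.1)[p.2]? = some m ∧ (h p.1 : ℕ) + p.2 = (T : ℕ))
    (hD2 : ∀ T m T' m', ∀ p ∈ D T m, ∀ p' ∈ D T' m', p.1 = p'.1 → T = T' ∧ m = m' ∧ p = p')
    (hD3 : ∀ T m, D T m = ∅ ∨ l' < (D T m).card) :
    ({j ∈ (JS : Set ι) | ∃ T m i, (j, i) ∈ D T m}.ncard : ℝ) ≤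
      3 / 4 * (JS.card : ℝ) := by
  classical
  let drops (k : Fin (2 * L) × M) : Finset (ι × ℕ) := D k.1 k.2
  let goodDrops (k : Fin (2 * L) × M) : Finset (ι × ℕ) := {p ∈ drops k | p.1 ∈ JS}
  have dropped_le : ({j ∈ (JS : Set ι) | ∃ T m i, (j, i) ∈ D T m}.ncard : ℝ) ≤
      ∑ k, (#(goodDrops k) : ℝ) := by
    simpa only [Prod.exists, Nat.cast_sum] using
      Nat.cast_le (α := ℝ).mpr (ncard_setOf_exists_mem_le_sum_card_filter JS drops)
  have heavy_le : 2 * ∑ k, (#(heavyPart l (goodDrops k)) : ℝ) ≤ #JS := by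
    rw [Fintype.sum_prod_type]
    exact_mod_cast two_mul_sum_card_heavyPart_le_of_good hgood hD1 hD2
  have total_le : ∑ k, (#(drops k) : ℝ) ≤ β * #JS := by
    refine le_trans ?_ hJβ
    exact_mod_cast sum_card_le_card_of_jointly_injective Prod.fst fun k k' p hp p' hp' hpp' =>
      have ⟨hT, hm, hp⟩ := hD2 k.1 k.2 k'.1 k'.2 p hp p' hp' hpp'
      ⟨Prod.ext hT hm, hp⟩
  refine dropped_le.trans (le_of_mul_le_mul_left ?_ (show 0 < 4 * β by positivity))
  calc 4 * β * ∑ k, (#(goodDrops k) : ℝ)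
      ≤ 4 * β * ∑ k, (#(heavyPart l (goodDrops k)) : ℝ) + ∑ k, (#(drops k) : ℝ) :=
        mul_sum_card_le_mul_sum_card_heavyPart_add_sum_card (by positivity) hl'
          (fun _ => filter_subset _ _) fun k => hD3 k.1 k.2
    _ ≤ 4 * β * (#JS / 2) + β * #JS := by gcongr; linarith
    _ = 4 * β * (3 / 4 * #JS) := by ring
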